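/- arXiv:0705.1562 — 2 statements merged into one kernel-verified Lean document; each statement's English description precedes it below -/
import Mathlib

section
/- Let G be a strongly connected finite directed graph without loops with sink s, and let x be any vertex. If T_1, T_2 ∈ Rec(G) and e_x(T_1) = e_x(T_2), then T_1 = T_2. In other words, the operation e_x of starting a chip at x and routing it to the sink acts injectively on the set Rec(G) of oriented-spanning-tree rotor configurations. -/
/-- A finite directed multigraph without loops, together with a distinguished
sink vertex and, for each vertex `x`, a cyclic ordering of the edges emanating
from `x`: the outgoing edges at `x` are indexed by `ZMod (deg x)` (in cyclic
order), and `head x e` is the target of the edge `e`. -/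
structure RotorGraph (V : Type*) [Fintype V] [DecidableEq V] where
  sink : V
  deg : V → ℕ
  deg_pos : ∀ x, 0 < deg x
  head : ∀ x : V, ZMod (deg x) → V
  no_loops : ∀ x e, head x e ≠ x

namespace RotorGraph

variable {V : Type*} [Fintype V] [DecidableEq V] (G : RotorGraph V)

/-- `x` is adjacent to `y` if some edge goes from `x` to `y`. -/
def Adj (x y : V) : Prop := ∃ e, G.head x e = y

/-- `G` is strongly connected: every vertex has a directed path to every vertex. -/
def StronglyConnected : Prop := ∀ x y : V, Relation.ReflTransGen G.Adj x y

/-- A rotor configuration: each vertex carries a rotor pointing along one of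
its outgoing edges.  (The value at the sink is irrelevant: it is never read
nor modified by the rotor-router walk.) -/
abbrev Conf := ∀ x : V, ZMod (G.deg x)

/-- One step of rotor-router walk for the state (rotor configuration, chip
location): if the chip is not at the sink, first increment the rotor at the
chip's location to the next edge in the cyclic ordering, then move the chip
along this new edge.  States whose chip is at the sink are absorbing. -/
def step (p : G.Conf × V) : G.Conf × V :=
  if p.2 = G.sink then p
  else (Function.update p.1 p.2 (p.1 p.2 + 1), G.head p.2 (p.1 p.2 + 1))

/-- The target of the rotor at `x`. -/
def next (T : G.Conf) (x : V) : V := G.head x (T x)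

/-- The rotors of `T` contain an oriented cycle all of whose vertices lie in `A`. -/
def HasCycleIn (T : G.Conf) (A : Set V) : Prop :=
  ∃ (m : ℕ) (x : V), 0 < m ∧ (∀ i < m, (G.next T)^[i] x ∈ A) ∧ (G.next T)^[m] x = x

/-- `T ∈ Rec(G)`: the rotors at the non-sink vertices form no oriented cycle,
i.e. they form an oriented spanning tree rooted at the sink. -/
def Rec (T : G.Conf) : Prop := ¬ G.HasCycleIn T {y | y ≠ G.sink}

/-- `e_x(T)`: start a chip at `x` and let it perform rotor-router walk until
it first reaches the sink; `chip x T` is the resulting rotor configuration. -/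
noncomputable def chip (x : V) (T : G.Conf) : G.Conf :=
  haveI := Classical.dec (∃ n, (G.step^[n] (T, x)).2 = G.sink)
  if h : ∃ n, (G.step^[n] (T, x)).2 = G.sink then (G.step^[Nat.find h] (T, x)).1 else T

end RotorGraph

/-- Redirecting `f` at `a` does not affect which points have `a` in their forward orbit. -/
theorem Function.exists_iterate_update_eq {α : Type*} [DecidableEq α] {f : α → α} {a : α} (b : α)
    {y : α} (h : ∃ n, f^[n] y = a) : ∃ n, (Function.update f a b)^[n] y = a := by
  obtain ⟨n, hn⟩ := h
  induction n generalizing y with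
  | zero => exact ⟨0, hn⟩
  | succ n ih =>
    by_cases hy : y = a
    · exact ⟨0, hy⟩
    · obtain ⟨m, hm⟩ := ih hn
      refine ⟨m + 1, ?_⟩
      rwa [Function.iterate_succ_apply, Function.update_of_ne hy]

namespace RotorGraph

variable {V : Type*} [Fintype V] [DecidableEq V] (G : RotorGraph V)

/-- The rotors of `T`, together with an additional rotor at the sink pointing to `x`. -/
def closedNext (x : V) (T : G.Conf) : V → V := Function.update (G.next T) G.sink x

/-- The rotors of the state `p`, closed up by a rotor from the sink to `x`, lead every vertex to
the chip: they form a unicycle with the chip on its cycle. -/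
def IsUnicycle (x : V) (p : G.Conf × V) : Prop := ∀ y, ∃ n, (G.closedNext x p.1)^[n] y = p.2

variable {G}

theorem step_of_ne {p : G.Conf × V} (hp : p.2 ≠ G.sink) :
    G.step p = (Function.update p.1 p.2 (p.1 p.2 + 1), G.head p.2 (p.1 p.2 + 1)) :=
  if_neg hp

theorem closedNext_sink (x : V) (T : G.Conf) : G.closedNext x T G.sink = x :=
  Function.update_self ..

theorem closedNext_step (x : V) {p : G.Conf × V} (hp : p.2 ≠ G.sink) :
    G.closedNext x (G.step p).1 = Function.update (G.closedNext x p.1) p.2 (G.step p).2 := by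
  rw [step_of_ne hp]
  funext y
  by_cases hy : y = p.2
  · subst hy
    simp [closedNext, next, hp]
  · by_cases hs : y = G.sink
    · subst hs
      simp [closedNext, hy]
    · simp [closedNext, next, hy, hs]

theorem closedNext_step_self (x : V) {p : G.Conf × V} (hp : p.2 ≠ G.sink) :
    G.closedNext x (G.step p).1 p.2 = (G.step p).2 := by
  rw [closedNext_step x hp, Function.update_self]

theorem Rec.exists_iterate_eq_sink {T : G.Conf} (hT : G.Rec T) (y : V) :
    ∃ n, (G.next T)^[n] y = G.sink := by
  by_contra! hne
  obtain ⟨i, j, hij, heq⟩ := Finite.exists_ne_map_eq_of_infinite fun n => (G.next T)^[n] y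
  wlog hlt : i < j generalizing i j
  · exact this j i hij.symm heq.symm (by omega)
  refine hT ⟨j - i, (G.next T)^[i] y, by omega, fun k _ => ?_, ?_⟩
  · rw [← Function.iterate_add_apply]
    exact hne _
  · rw [← Function.iterate_add_apply, Nat.sub_add_cancel hlt.le]
    exact heq.symm

theorem Rec.exists_iterate_closedNext_eq_sink {T : G.Conf} (hT : G.Rec T) (x y : V) :
    ∃ n, (G.closedNext x T)^[n] y = G.sink :=
  Function.exists_iterate_update_eq x (hT.exists_iterate_eq_sink y)

theorem Rec.isUnicycle {T : G.Conf} (hT : G.Rec T) (x : V) : G.IsUnicycle x (T, x) := by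
  intro y
  obtain ⟨n, hn⟩ := hT.exists_iterate_closedNext_eq_sink x y
  refine ⟨n + 1, ?_⟩
  rw [Function.iterate_succ_apply', hn, closedNext_sink]

theorem Rec.sink_mem_periodicPts {T : G.Conf} (hT : G.Rec T) (x : V) :
    G.sink ∈ Function.periodicPts (G.closedNext x T) := by
  obtain ⟨n, hn⟩ := hT.exists_iterate_closedNext_eq_sink x x
  refine ⟨n + 1, n.succ_pos, ?_⟩
  rwa [Function.IsPeriodicPt, Function.IsFixedPt, Function.iterate_succ_apply, closedNext_sink]

theorem IsUnicycle.step {x : V} {p : G.Conf × V} (h : G.IsUnicycle x p) (hp : p.2 ≠ G.sink) :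
    G.IsUnicycle x (G.step p) := by
  intro y
  obtain ⟨n, hn⟩ := Function.exists_iterate_update_eq (G.step p).2 (h y)
  rw [← closedNext_step x hp] at hn
  refine ⟨n + 1, ?_⟩
  rw [Function.iterate_succ_apply', hn, closedNext_step_self x hp]

theorem IsUnicycle.iterate_step {x : V} {p : G.Conf × V} (h : G.IsUnicycle x p) {n : ℕ}
    (hn : ∀ i < n, (G.step^[i] p).2 ≠ G.sink) : G.IsUnicycle x (G.step^[n] p) := by
  induction n with
  | zero => exact h
  | succ n ih =>
    rw [Function.iterate_succ_apply']
    exact (ih fun i hi => hn i (by omega)).step (hn n n.lt_succ_self)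

/-- The previous location of the chip lies on the cycle of the current unicycle. -/
theorem IsUnicycle.mem_periodicPts {x : V} {p : G.Conf × V} (h : G.IsUnicycle x p)
    (hp : p.2 ≠ G.sink) : p.2 ∈ Function.periodicPts (G.closedNext x (G.step p).1) := by
  obtain ⟨n, hn⟩ := Function.exists_iterate_update_eq (G.step p).2 (h (G.step p).2)
  rw [← closedNext_step x hp] at hn
  refine ⟨n + 1, n.succ_pos, ?_⟩
  rwa [Function.IsPeriodicPt, Function.IsFixedPt, Function.iterate_succ_apply,
    closedNext_step_self x hp]

theorem IsUnicycle.eq_of_step_eq {x : V} {p q : G.Conf × V} (hp : G.IsUnicycle x p)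
    (hq : G.IsUnicycle x q) (hps : p.2 ≠ G.sink) (hqs : q.2 ≠ G.sink)
    (h : G.step p = G.step q) : p = q := by
  have hw : p.2 = q.2 := by
    refine (Function.bijOn_periodicPts (G.closedNext x (G.step p).1)).injOn
      (hp.mem_periodicPts hps) (h ▸ hq.mem_periodicPts hqs) ?_
    rw [closedNext_step_self x hps, h, closedNext_step_self x hqs]
  obtain ⟨T, w⟩ := p
  obtain ⟨T', w'⟩ := q
  obtain rfl : w = w' := hw
  rw [step_of_ne hps, step_of_ne hqs] at h
  have h' := congrArg Prod.fst h
  refine Prod.ext (funext fun y => ?_) rfl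
  have hy := congrFun h' y
  by_cases hyw : y = w
  · subst hyw
    simpa using hy
  · simpa [hyw] using hy

/-- Two walks from `x`, started from acyclic configurations, that meet before leaving the sink
have the same length and the same initial configuration. -/
theorem Rec.eq_of_iterate_step_eq {x : V} {T₁ T₂ : G.Conf} (h₁ : G.Rec T₁) (h₂ : G.Rec T₂)
    {n m : ℕ} (hnm : n ≤ m) (hn : ∀ i < n, (G.step^[i] (T₁, x)).2 ≠ G.sink)
    (hm : ∀ i < m, (G.step^[i] (T₂, x)).2 ≠ G.sink)
    (h : G.step^[n] (T₁, x) = G.step^[m] (T₂, x)) : n = m ∧ T₁ = T₂ := by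
  induction n generalizing m with
  | zero =>
    cases m with
    | zero => exact ⟨rfl, congrArg Prod.fst h⟩
    | succ k =>
      have hk := hm k k.lt_succ_self
      have hu := (h₂.isUnicycle x).iterate_step fun i hi => hm i (Nat.lt_succ_of_lt hi)
      rw [Function.iterate_succ_apply', Function.iterate_zero_apply] at h
      have hper := hu.mem_periodicPts hk
      have hself := closedNext_step_self x hk
      rw [← h] at hper hself
      refine absurd ((Function.bijOn_periodicPts (G.closedNext x T₁)).injOn hper
        (h₁.sink_mem_periodicPts x) ?_) hk
      rw [hself, closedNext_sink]
  | succ n ih =>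
    obtain ⟨k, rfl⟩ : ∃ k, m = k + 1 := ⟨m - 1, by omega⟩
    have hn' : ∀ i < n, (G.step^[i] (T₁, x)).2 ≠ G.sink := fun i hi => hn i (by omega)
    have hm' : ∀ i < k, (G.step^[i] (T₂, x)).2 ≠ G.sink := fun i hi => hm i (by omega)
    rw [Function.iterate_succ_apply', Function.iterate_succ_apply'] at h
    have := ih (by omega) hn' hm' <|
      ((h₁.isUnicycle x).iterate_step hn').eq_of_step_eq ((h₂.isUnicycle x).iterate_step hm')
        (hn n n.lt_succ_self) (hm k k.lt_succ_self) h
    exact ⟨by omega, this.2⟩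

/-- A chip started from an acyclic configuration reaches the sink. -/
theorem Rec.exists_iterate_step_eq_sink {T : G.Conf} (hT : G.Rec T) (x : V) :
    ∃ n, (G.step^[n] (T, x)).2 = G.sink := by
  by_contra! hne
  have (y : V) : NeZero (G.deg y) := ⟨(G.deg_pos y).ne'⟩
  obtain ⟨i, j, hij, heq⟩ := Finite.exists_ne_map_eq_of_infinite fun n => G.step^[n] (T, x)
  wlog hlt : i < j generalizing i j
  · exact this j i hij.symm heq.symm (by omega)
  exact hij (hT.eq_of_iterate_step_eq hT hlt.le (fun k _ => hne k) (fun k _ => hne k) heq).1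

theorem Rec.exists_chip_eq {T : G.Conf} (hT : G.Rec T) (x : V) :
    ∃ n, (∀ i < n, (G.step^[i] (T, x)).2 ≠ G.sink) ∧
      G.step^[n] (T, x) = (G.chip x T, G.sink) := by
  classical
  have h := hT.exists_iterate_step_eq_sink x
  refine ⟨Nat.find h, fun i hi => Nat.find_min h hi, Prod.ext ?_ (Nat.find_spec h)⟩
  rw [chip, dif_pos h]

end RotorGraph

/-- If `T₁, T₂ ∈ Rec(G)` and `e_x(T₁) = e_x(T₂)`, then `T₁ = T₂`: the
operation `e_x` acts injectively on `Rec(G)`. -/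
theorem stmt3 {V : Type*} [Fintype V] [DecidableEq V] (G : RotorGraph V)
    (hG : G.StronglyConnected) (x : V) (T1 T2 : G.Conf)
    (h1 : G.Rec T1) (h2 : G.Rec T2) (h : G.chip x T1 = G.chip x T2) :
    T1 = T2 := by
  obtain ⟨n, hn, hn'⟩ := h1.exists_chip_eq x
  obtain ⟨m, hm, hm'⟩ := h2.exists_chip_eq x
  have heq : G.step^[n] (T1, x) = G.step^[m] (T2, x) := by rw [hn', hm', h]
  rcases le_total n m with hnm | hmn
  · exact (h1.eq_of_iterate_step_eq h2 hnm hn hm heq).2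
  · exact (h2.eq_of_iterate_step_eq h1 hmn hm hn heq.symm).2.symm
end

section
/- Let Y be a principal branch of the infinite ternary tree and let a = a_1…a_n be a binary word of length n. Then a is the escape sequence of the first n chips for some initial rotor configuration on Y if and only if a satisfies condition (P_k) for all k ≥ 1, i.e., for every k, every subword of a of length 2^k − 1 contains at most 2^{k−1} ones. -/
/-!
A principal branch `Y` of the infinite ternary tree.

`Y` is rooted at a neighbor `r` of the origin `o` and includes the edge
`(o, r)`, so `r` has degree 3 in `Y` and `o` has degree 1.  Vertices of `Y`
other than `o` are encoded as lists over `Fin 2` (the root `r` is `[]` and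
children are obtained by appending a letter: `0` = left, `1` = right); a chip
position is `Option (List (Fin 2))` with `none` standing for `o`.

Every vertex other than `o` carries a rotor with three directions indexed by
`ZMod 3`: value `0` (direction 1) points to the left child, value `1`
(direction 2) to the right child, and value `2` (direction 3) to the parent
(for `r`, to `o`).  A rotor-router step increments the rotor at the chip's
location, then moves the chip in the new direction.  Chips are started at `o`
one at a time; a chip immediately steps to `r` and then walks until it
returns to `o` (absorbing) or escapes to infinity, rotors persisting between
chips.
-/

/-- Rotor configurations on the branch `Y`. -/
abbrev YConf := List (Fin 2) → ZMod 3

/-- One rotor-router step on `Y`; the origin `o` (= `none`) is absorbing. -/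
def ystep (p : YConf × Option (List (Fin 2))) : YConf × Option (List (Fin 2)) :=
  match p with
  | (C, none) => (C, none)
  | (C, some w) =>
    let r := C w + 1
    let C' := Function.update C w r
    if h : r.val < 2 then (C', some (w ++ [⟨r.val, h⟩]))
    else (C', if w = [] then none else some w.dropLast)

/-- The chip started at `o` (which immediately steps to the root `r`)
eventually returns to `o`. -/
def ychipReturns (C : YConf) : Prop := ∃ k, (ystep^[k] (C, some [])).2 = none

/-- The rotor configuration left behind by one chip started at `o`: each
rotor takes its eventual value along the trajectory (well-defined whether the
chip returns to `o` or escapes to infinity, since in the latter case it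
visits each vertex only finitely often). -/
noncomputable def ynextConf (C : YConf) : YConf := fun v =>
  haveI := Classical.dec (∃ c : ZMod 3, ∃ K : ℕ, ∀ k, K ≤ k → (ystep^[k] (C, some [])).1 v = c)
  if h : ∃ c : ZMod 3, ∃ K : ℕ, ∀ k, K ≤ k → (ystep^[k] (C, some [])).1 v = c then
    h.choose
  else C v

/-- The rotor configuration seen by the `(j+1)`-st chip. -/
noncomputable def yconfSeq (C0 : YConf) : ℕ → YConf
  | 0 => C0
  | j + 1 => ynextConf (yconfSeq C0 j)

/-- The `(j+1)`-st chip (`j = 0, 1, 2, …`) escapes to infinity. -/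
def yescapes (C0 : YConf) (j : ℕ) : Prop := ¬ ychipReturns (yconfSeq C0 j)

/-- Condition `(P_k)` for a binary word: every subword (block of consecutive
letters) of length `2ᵏ − 1` contains at most `2^(k−1)` ones. -/
def CondP (w : List Bool) (k : ℕ) : Prop :=
  ∀ i : ℕ, i + (2 ^ k - 1) ≤ w.length →
    ((w.drop i).take (2 ^ k - 1)).count true ≤ 2 ^ (k - 1)

/-! ### Eventual values -/

open Classical in
/-- The eventual value of a sequence, with default `d` if it is not eventually constant. -/
noncomputable def evLim (f : ℕ → ZMod 3) (d : ZMod 3) : ZMod 3 :=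
  if h : ∃ c : ZMod 3, ∃ K : ℕ, ∀ k, K ≤ k → f k = c then h.choose else d

theorem evLim_eq {f : ℕ → ZMod 3} {c : ZMod 3} (K : ℕ) (h : ∀ k, K ≤ k → f k = c)
    (d : ZMod 3) : evLim f d = c := by
  have h' : ∃ c : ZMod 3, ∃ K : ℕ, ∀ k, K ≤ k → f k = c := ⟨c, K, h⟩
  rw [evLim, dif_pos h']
  obtain ⟨K', hK'⟩ := h'.choose_spec
  rw [← hK' (max K K') (le_max_right _ _), h _ (le_max_left _ _)]

theorem evLim_shift (f : ℕ → ZMod 3) (d : ZMod 3) : evLim (fun k => f (k + 1)) d = evLim f d := by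
  by_cases h : ∃ c : ZMod 3, ∃ K : ℕ, ∀ k, K ≤ k → f k = c
  · obtain ⟨c, K, hK⟩ := h
    rw [evLim_eq K hK, evLim_eq K fun k hk => hK (k + 1) (by omega)]
  · have h' : ¬ ∃ c : ZMod 3, ∃ K : ℕ, ∀ k, K ≤ k → f (k + 1) = c := by
      rintro ⟨c, K, hK⟩
      refine h ⟨c, K + 1, fun k hk => ?_⟩
      obtain ⟨k, rfl⟩ := Nat.exists_eq_add_of_le' (show 1 ≤ k by omega)
      exact hK k (by omega)
    rw [evLim, evLim, dif_neg h, dif_neg h']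

theorem ynextConf_apply (C : YConf) (v : List (Fin 2)) :
    ynextConf C v = evLim (fun k => (ystep^[k] (C, some [])).1 v) (C v) := by
  unfold ynextConf evLim
  split_ifs <;> rfl

/-! ### Outcome of a walk -/

/-- The walk started from the state `p` escapes iff `b` holds, and leaves the configuration `C'`
behind, where `d` is the default configuration for rotors without an eventual value. -/
def Outcome (d : YConf) (p : YConf × Option (List (Fin 2))) (C' : YConf) (b : Prop) : Prop :=
  ((¬ ∃ k, (ystep^[k] p).2 = none) ↔ b) ∧
    ∀ v, evLim (fun k => (ystep^[k] p).1 v) (d v) = C' v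

theorem ystep_none (C : YConf) : ystep (C, none) = (C, none) := rfl

theorem iterate_ystep_none (C : YConf) (k : ℕ) : ystep^[k] (C, none) = (C, none) :=
  Function.iterate_fixed (ystep_none C) k

theorem outcome_none (d C : YConf) : Outcome d (C, none) C False := by
  refine ⟨iff_false_intro (not_not.2 ⟨0, rfl⟩), fun v => evLim_eq 0 (fun k _ => ?_) _⟩
  rw [iterate_ystep_none]

theorem Outcome.of_ystep {d : YConf} {p : YConf × Option (List (Fin 2))} {C' : YConf} {b : Prop}
    (h : Outcome d (ystep p) C' b) : Outcome d p C' b := by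
  refine ⟨?_, fun v => ?_⟩
  · rw [← h.1]
    refine not_congr ⟨?_, ?_⟩
    · rintro ⟨k, hk⟩
      refine ⟨k, ?_⟩
      rw [← Function.iterate_succ_apply, Function.iterate_succ_apply']
      generalize ystep^[k] p = q at hk ⊢
      obtain ⟨C, o⟩ := q
      subst hk
      rfl
    · rintro ⟨k, hk⟩
      exact ⟨k + 1, hk⟩
  · rw [← h.2 v, ← evLim_shift]
    rfl

theorem Outcome.of_iterate {d : YConf} {C' : YConf} {b : Prop} (n : ℕ) :
    ∀ {p : YConf × Option (List (Fin 2))},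
      Outcome d (ystep^[n] p) C' b → Outcome d p C' b := by
  induction n with
  | zero => exact fun h => h
  | succ n ih => exact fun h => (ih h).of_ystep

theorem Outcome.ynextConf_eq {C C' : YConf} {b : Prop} (h : Outcome C (C, some []) C' b) :
    ynextConf C = C' :=
  funext fun v => (ynextConf_apply C v).trans (h.2 v)

theorem Outcome.returns_iff {C C' : YConf} {b : Prop} (h : Outcome C (C, some []) C' b) :
    ¬ ychipReturns C ↔ b := h.1

/-! ### Sub-branches -/

/-- The configuration with rotor `q` at the root and configurations `f 0`, `f 1` on the left and
right sub-branches. -/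
def joinConf (q : ZMod 3) (f : Fin 2 → YConf) : YConf
  | [] => q
  | x :: w => f x w

theorem exists_joinConf (C : YConf) : ∃ q f, C = joinConf q f := by
  refine ⟨C [], fun x w => C (x :: w), funext fun v => ?_⟩
  cases v <;> rfl

/-- The position in the branch corresponding to a position in its sub-branch at child `x`. -/
def liftPos (x : Fin 2) : Option (List (Fin 2)) → Option (List (Fin 2))
  | none => some []
  | some w => some (x :: w)

theorem joinConf_update_cons (q : ZMod 3) (f : Fin 2 → YConf) (x : Fin 2) (w : List (Fin 2))
    (c : ZMod 3) :
    Function.update (joinConf q f) (x :: w) c =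
      joinConf q (Function.update f x (Function.update (f x) w c)) := by
  funext v
  rcases v with _ | ⟨y, v⟩
  · rw [Function.update_of_ne (by simp)]
    rfl
  · by_cases hy : y = x
    · subst hy
      by_cases hv : v = w
      · subst hv
        simp [joinConf]
      · rw [Function.update_of_ne (by simpa using hv)]
        simp [joinConf, Function.update_of_ne hv]
    · rw [Function.update_of_ne (by simp [hy])]
      simp [joinConf, Function.update_of_ne hy]

theorem joinConf_update_nil (q : ZMod 3) (f : Fin 2 → YConf) (c : ZMod 3) :
    Function.update (joinConf q f) [] c = joinConf c f := by
  funext v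
  rcases v with _ | ⟨y, v⟩
  · simp [joinConf]
  · rw [Function.update_of_ne (by simp)]
    rfl

theorem ystep_joinConf_cons (q : ZMod 3) (f : Fin 2 → YConf) (x : Fin 2) (w : List (Fin 2)) :
    ystep (joinConf q f, some (x :: w)) =
      (joinConf q (Function.update f x (ystep (f x, some w)).1),
        liftPos x (ystep (f x, some w)).2) := by
  have hC : joinConf q f (x :: w) = f x w := rfl
  simp only [ystep, hC, joinConf_update_cons, reduceCtorEq, if_false]
  split_ifs with h1 h2
  · rfl
  · subst h2
    rfl
  · simp [liftPos, List.dropLast_cons_of_ne_nil h2]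

theorem iterate_ystep_joinConf (q : ZMod 3) (f : Fin 2 → YConf) (x : Fin 2) (k : ℕ)
    (hk : ∀ j < k, (ystep^[j] (f x, some [])).2 ≠ none) :
    ystep^[k] (joinConf q f, some [x]) =
      (joinConf q (Function.update f x (ystep^[k] (f x, some [])).1),
        liftPos x (ystep^[k] (f x, some [])).2) := by
  induction k with
  | zero => simp [liftPos]
  | succ k ih =>
    rw [Function.iterate_succ_apply', ih fun j hj => hk j (by omega), Function.iterate_succ_apply']
    have h := hk k (by omega)
    generalize ystep^[k] (f x, some []) = p at h
    obtain ⟨C, o⟩ := p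
    obtain ⟨w, rfl⟩ := Option.ne_none_iff_exists'.1 h
    rw [liftPos, ystep_joinConf_cons]
    simp

theorem Outcome.of_child_returns {d C' : YConf} {b : Prop} {q : ZMod 3} {f : Fin 2 → YConf}
    {x : Fin 2} (hx : ychipReturns (f x))
    (h : Outcome d (joinConf q (Function.update f x (ynextConf (f x))), some []) C' b) :
    Outcome d (joinConf q f, some [x]) C' b := by
  classical
  refine Outcome.of_iterate (Nat.find hx) ?_
  rw [iterate_ystep_joinConf _ _ _ _ fun j hj => Nat.find_min hx hj, Nat.find_spec hx]
  have hN : ynextConf (f x) = (ystep^[Nat.find hx] (f x, some [])).1 := by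
    refine (Outcome.of_iterate (b := False) (Nat.find hx) ?_).ynextConf_eq
    have h0 := Nat.find_spec hx
    generalize ystep^[Nat.find hx] (f x, some []) = p at h0
    obtain ⟨C, o⟩ := p
    subst h0
    exact outcome_none _ _
  rwa [← hN]

theorem outcome_of_child_escapes {d : YConf} {q : ZMod 3} {f : Fin 2 → YConf}
    {x : Fin 2} (hx : ¬ ychipReturns (f x)) (hd : ∀ w, d (x :: w) = f x w) :
    Outcome d (joinConf q f, some [x])
      (joinConf q (Function.update f x (ynextConf (f x)))) True := by
  have hx' : ∀ k, (ystep^[k] (f x, some [])).2 ≠ none := fun k hk => hx ⟨k, hk⟩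
  have hit := fun k => iterate_ystep_joinConf q f x k fun j _ => hx' j
  refine ⟨iff_true_intro ?_, fun v => ?_⟩
  · rintro ⟨k, hk⟩
    rw [hit] at hk
    cases ho : (ystep^[k] (f x, some [])).2 <;> simp [ho, liftPos] at hk
  · simp only [hit]
    rcases v with _ | ⟨y, v⟩
    · exact evLim_eq 0 (fun k _ => rfl) _
    · by_cases hy : y = x
      · subst hy
        simp [joinConf, hd, ynextConf_apply]
      · refine evLim_eq 0 (fun k _ => ?_) _
        simp [joinConf, Function.update_of_ne hy]

theorem ystep_joinConf_zero (f : Fin 2 → YConf) :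
    ystep (joinConf 0 f, some []) = (joinConf 1 f, some [1]) := by
  have h : joinConf 0 f [] + 1 = 1 := rfl
  simp only [ystep, h, joinConf_update_nil]
  rfl

theorem ystep_joinConf_one (f : Fin 2 → YConf) :
    ystep (joinConf 1 f, some []) = (joinConf 2 f, none) := by
  have h : joinConf 1 f [] + 1 = 2 := rfl
  simp only [ystep, h, joinConf_update_nil]
  rfl

theorem ystep_joinConf_two (f : Fin 2 → YConf) :
    ystep (joinConf 2 f, some []) = (joinConf 0 f, some [0]) := by
  have h : joinConf 2 f [] + 1 = 0 := rfl
  simp only [ystep, h, joinConf_update_nil]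
  rfl

theorem outcome_joinConf_one (d : YConf) (f : Fin 2 → YConf) :
    Outcome d (joinConf 1 f, some []) (joinConf 2 f) False := by
  apply Outcome.of_ystep
  rw [ystep_joinConf_one]
  exact outcome_none _ _

theorem outcome_joinConf_zero_of_escapes {d : YConf} {f : Fin 2 → YConf}
    (h1 : ¬ ychipReturns (f 1)) (hd : ∀ w, d (1 :: w) = f 1 w) :
    Outcome d (joinConf 0 f, some [])
      (joinConf 1 (Function.update f 1 (ynextConf (f 1)))) True := by
  apply Outcome.of_ystep
  rw [ystep_joinConf_zero]
  exact outcome_of_child_escapes h1 hd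

theorem outcome_joinConf_zero_of_returns {d : YConf} {f : Fin 2 → YConf}
    (h1 : ychipReturns (f 1)) :
    Outcome d (joinConf 0 f, some [])
      (joinConf 2 (Function.update f 1 (ynextConf (f 1)))) False := by
  apply Outcome.of_ystep
  rw [ystep_joinConf_zero]
  exact Outcome.of_child_returns h1 (outcome_joinConf_one _ _)

theorem outcome_joinConf_two_of_escapes {d : YConf} {f : Fin 2 → YConf}
    (h0 : ¬ ychipReturns (f 0)) (hd : ∀ w, d (0 :: w) = f 0 w) :
    Outcome d (joinConf 2 f, some [])
      (joinConf 0 (Function.update f 0 (ynextConf (f 0)))) True := by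
  apply Outcome.of_ystep
  rw [ystep_joinConf_two]
  exact outcome_of_child_escapes h0 hd

theorem Outcome.joinConf_two_of_returns {d C' : YConf} {b : Prop} {f : Fin 2 → YConf}
    (h0 : ychipReturns (f 0))
    (h : Outcome d (joinConf 0 (Function.update f 0 (ynextConf (f 0))), some []) C' b) :
    Outcome d (joinConf 2 f, some []) C' b := by
  apply Outcome.of_ystep
  rw [ystep_joinConf_two]
  exact Outcome.of_child_returns h0 h

theorem update_zero_one (f : Fin 2 → YConf) (a b : YConf) :
    Function.update (Function.update f 0 a) 1 b = ![a, b] := by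
  funext x
  fin_cases x <;> simp [Function.update]

/-! ### Counting escapes -/

open Classical in
/-- The number of escaping chips among the first `n`, starting from `C`. -/
noncomputable def escCount : YConf → ℕ → ℕ
  | _, 0 => 0
  | C, n + 1 => (if ychipReturns C then 0 else 1) + escCount (ynextConf C) n

theorem escCount_zero (C : YConf) : escCount C 0 = 0 := rfl

theorem Outcome.escCount_succ_of_escapes {C C' : YConf} (h : Outcome C (C, some []) C' True)
    (n : ℕ) : escCount C (n + 1) = 1 + escCount C' n := by
  rw [escCount, h.ynextConf_eq, if_neg (h.returns_iff.2 trivial)]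

theorem Outcome.escCount_succ_of_returns {C C' : YConf} (h : Outcome C (C, some []) C' False)
    (n : ℕ) : escCount C (n + 1) = escCount C' n := by
  rw [escCount, h.ynextConf_eq, if_pos (by_contra h.returns_iff.1), zero_add]

open Classical in
theorem escCount_succ' (C : YConf) (n : ℕ) :
    escCount C (n + 1) = escCount C n + if ychipReturns (ynextConf^[n] C) then 0 else 1 := by
  induction n generalizing C with
  | zero => rw [escCount, escCount, add_comm, Function.iterate_zero_apply]; rfl
  | succ n ih => rw [escCount, ih, escCount, Function.iterate_succ_apply, add_assoc]

/-- `A` counts the ones in the prefixes of a binary sequence. -/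
structure IsCount (A : ℕ → ℕ) : Prop where
  zero : A 0 = 0
  le_succ : ∀ n, A n ≤ A (n + 1)
  succ_le : ∀ n, A (n + 1) ≤ A n + 1

theorem isCount_escCount (C : YConf) : IsCount (escCount C) := by
  refine ⟨rfl, fun n => ?_, fun n => ?_⟩ <;> rw [escCount_succ'] <;> split_ifs <;> omega

theorem IsCount.mono {A : ℕ → ℕ} (hA : IsCount A) {m n : ℕ} (h : m ≤ n) : A m ≤ A n :=
  monotone_nat_of_le_succ hA.le_succ h

theorem IsCount.add_le {A : ℕ → ℕ} (hA : IsCount A) (m n : ℕ) : A (m + n) ≤ A m + n := by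
  induction n with
  | zero => rfl
  | succ n ih =>
    have := hA.succ_le (m + n)
    rw [← add_assoc]
    omega

/-- The sequence counted by `A` is `1^(s 0) 0 1^(s 1) 0 …`, where `S` is the sequence of partial
sums of `s`. -/
def Encodes (A S : ℕ → ℕ) : Prop :=
  ∀ i, A (i + S i) = S i ∧ A (i + S (i + 1)) = S (i + 1)

theorem encodes_joinConf_two (f : Fin 2 → YConf) :
    Encodes (escCount (joinConf 2 f)) (fun i => escCount (f 0) i + escCount (f 1) i) := by
  have key : ∀ f : Fin 2 → YConf, ∃ s,
      (∀ n, escCount (f 0) (n + 1) + escCount (f 1) (n + 1) =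
        s + (escCount (ynextConf (f 0)) n + escCount (ynextConf (f 1)) n)) ∧
      escCount (joinConf 2 f) s = s ∧
      ∀ n, escCount (joinConf 2 f) (s + 1 + n) =
        s + escCount (joinConf 2 ![ynextConf (f 0), ynextConf (f 1)]) n := by
    intro f
    by_cases h0 : ychipReturns (f 0) <;> by_cases h1 : ychipReturns (f 1)
    · have H := Outcome.joinConf_two_of_returns (d := joinConf 2 f) h0
        (outcome_joinConf_zero_of_returns (by simpa using h1))
      simp only [update_zero_one] at H
      refine ⟨0, fun n => by simp [escCount, h0, h1], rfl, fun n => ?_⟩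
      rw [zero_add, zero_add, add_comm, H.escCount_succ_of_returns]
      simp
    · have H := Outcome.joinConf_two_of_returns (d := joinConf 2 f) h0
        (outcome_joinConf_zero_of_escapes (by simpa using h1) (by simp [joinConf]))
      simp only [update_zero_one] at H
      refine ⟨1, fun n => by simp [escCount, h0, h1]; omega, ?_, fun n => ?_⟩
      · exact H.escCount_succ_of_escapes 0
      · rw [show 1 + 1 + n = n + 1 + 1 by omega, H.escCount_succ_of_escapes,
          (outcome_joinConf_one _ _).escCount_succ_of_returns]
        simp
    · have H := outcome_joinConf_two_of_escapes (d := joinConf 2 f) h0 (by simp [joinConf])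
      have H' := outcome_joinConf_zero_of_returns
        (d := joinConf 0 (Function.update f 0 (ynextConf (f 0))))
        (f := Function.update f 0 (ynextConf (f 0))) (by simpa using h1)
      simp only [update_zero_one] at H'
      refine ⟨1, fun n => by simp [escCount, h0, h1]; omega, ?_, fun n => ?_⟩
      · exact H.escCount_succ_of_escapes 0
      · rw [show 1 + 1 + n = n + 1 + 1 by omega, H.escCount_succ_of_escapes,
          H'.escCount_succ_of_returns]
        simp
    · have H := outcome_joinConf_two_of_escapes (d := joinConf 2 f) h0 (by simp [joinConf])
      have H' := outcome_joinConf_zero_of_escapes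
        (d := joinConf 0 (Function.update f 0 (ynextConf (f 0))))
        (f := Function.update f 0 (ynextConf (f 0))) (by simpa using h1) (by simp [joinConf])
      simp only [update_zero_one] at H'
      refine ⟨2, fun n => by simp [escCount, h0, h1]; omega, ?_, fun n => ?_⟩
      · rw [show 2 = 0 + 1 + 1 by rfl, H.escCount_succ_of_escapes, H'.escCount_succ_of_escapes,
          escCount_zero]
      · rw [show 2 + 1 + n = n + 1 + 1 + 1 by omega, H.escCount_succ_of_escapes,
          H'.escCount_succ_of_escapes, (outcome_joinConf_one _ _).escCount_succ_of_returns]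
        simp
        omega
  intro i
  dsimp only
  induction i generalizing f with
  | zero =>
    obtain ⟨s, hs, hA, -⟩ := key f
    simpa [hs, escCount_zero] using hA
  | succ i ih =>
    obtain ⟨s, hs, -, hN⟩ := key f
    have ih := ih ![ynextConf (f 0), ynextConf (f 1)]
    simp only [Matrix.cons_val_zero, Matrix.cons_val_one] at ih
    rw [hs, hs]
    refine ⟨?_, ?_⟩
    · rw [show ∀ a, i + 1 + (s + a) = s + 1 + (i + a) by intros; omega, hN, ih.1]
    · rw [show ∀ a, i + 1 + (s + a) = s + 1 + (i + a) by intros; omega, hN, ih.2]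

theorem Encodes.cons {A A' S' : ℕ → ℕ} {s : ℕ} (h : Encodes A' S') (hS' : S' 0 = 0)
    (h0 : A 0 = 0) (hs : A s = s) (hA : ∀ n, A (s + 1 + n) = s + A' n) :
    Encodes A (fun i => if i = 0 then 0 else s + S' (i - 1)) := by
  rintro (_ | i)
  · simp [h0, hS', hs]
  · simp only [Nat.add_eq_zero_iff, one_ne_zero, and_false, if_false, Nat.add_sub_cancel]
    rw [show ∀ a, i + 1 + (s + a) = s + 1 + (i + a) by intros; omega,
      show ∀ a, i + 1 + (s + a) = s + 1 + (i + a) by intros; omega, hA, hA, (h i).1, (h i).2]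
    simp

/-- The counting form of condition `(P_k)` for all `k ≥ 1`. -/
def Sparse (k : ℕ) (A : ℕ → ℕ) : Prop :=
  ∀ i, A (i + (2 ^ (k + 1) - 1)) ≤ A i + 2 ^ k

theorem Encodes.sparse_succ {A S : ℕ → ℕ} (hA : IsCount A) (h : Encodes A S)
    (hS0 : S 0 = 0) {k : ℕ} (hk : ∀ i, S (i + (2 ^ (k + 1) - 1)) ≤ S i + 2 ^ (k + 1)) :
    Sparse (k + 1) A := by
  intro p
  have hpow : 2 ^ (k + 1 + 1) = 2 * 2 ^ (k + 1) := by ring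
  have hpos : 2 ≤ 2 ^ (k + 1) := by rw [pow_succ]; have := Nat.one_le_two_pow (n := k); omega
  obtain ⟨u, hu, hu'⟩ : ∃ u, u + S u ≤ p ∧ p < u + 1 + S (u + 1) := by
    by_contra! hcon
    have : ∀ u, u + S u ≤ p := by
      intro u
      induction u with
      | zero => omega
      | succ u ih => exact hcon u ih
    have := this (p + 1)
    omega
  obtain ⟨m, hm⟩ : ∃ m, 2 ^ (k + 1) = m + 1 := ⟨_, (Nat.succ_pred (by omega)).symm⟩
  have hk := hk u
  rw [hpow]
  rw [hm] at hk ⊢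
  simp only [Nat.add_sub_cancel] at hk
  have e1 := (h u).1
  have e2 := (h u).2
  have e3 := (h (u + m)).1
  have m1 := hA.mono hu
  rcases le_total (p + (2 * (m + 1) - 1)) (u + m + S (u + m)) with hc | hc
  · have := hA.mono hc
    omega
  · obtain ⟨x, hx⟩ := Nat.exists_eq_add_of_le hc
    obtain ⟨y, hy⟩ := Nat.exists_eq_add_of_le (show p ≤ u + S (u + 1) by omega)
    have h1 := hA.add_le (u + m + S (u + m)) x
    have h2 := hA.add_le p y
    rw [← hx] at h1
    rw [← hy] at h2
    omega

theorem Sparse.shift {A : ℕ → ℕ} (hA : IsCount A) {k : ℕ} (h : Sparse k A) :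
    Sparse k (fun i => A (i - 1)) := by
  rintro (_ | i)
  · exact (hA.mono (by omega)).trans (h 0)
  · have hi := h i
    have hpos : 1 ≤ 2 ^ (k + 1) := Nat.one_le_two_pow
    rwa [← Nat.add_sub_cancel (n := i + (2 ^ (k + 1) - 1)) (m := 1), add_right_comm] at hi

theorem exists_encodes (C : YConf) : ∃ c d : ℕ → ℕ,
    Encodes (escCount C) (fun i => c i + d i) ∧
      (∃ C', c = escCount C' ∨ c = fun i => escCount C' (i - 1)) ∧
      (∃ C', d = escCount C' ∨ d = fun i => escCount C' (i - 1)) := by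
  obtain ⟨q, f, rfl⟩ := exists_joinConf C
  obtain rfl | rfl | rfl : q = 0 ∨ q = 1 ∨ q = 2 := by revert q; decide
  · refine ⟨fun i => escCount (f 0) (i - 1), escCount (f 1), ?_, ⟨_, Or.inr rfl⟩, ⟨_, Or.inl rfl⟩⟩
    have H := encodes_joinConf_two (Function.update f 1 (ynextConf (f 1)))
    by_cases h1 : ychipReturns (f 1)
    · have O := outcome_joinConf_zero_of_returns (d := joinConf 0 f) h1
      convert H.cons (A := escCount (joinConf 0 f)) (s := 0) rfl rfl rfl ?_ using 2 with i
      · rcases i with _ | i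
        · rfl
        · simp [escCount, h1]
      · intro n
        rw [zero_add, zero_add, add_comm, O.escCount_succ_of_returns]
    · have O := outcome_joinConf_zero_of_escapes (d := joinConf 0 f) h1 (by simp [joinConf])
      convert H.cons (A := escCount (joinConf 0 f)) (s := 1) rfl rfl ?_ ?_ using 2 with i
      · rcases i with _ | i
        · rfl
        · simp [escCount, h1]
          omega
      · rw [← zero_add 1, O.escCount_succ_of_escapes, escCount_zero]
      · intro n
        rw [show 1 + 1 + n = n + 1 + 1 by omega, O.escCount_succ_of_escapes,
          (outcome_joinConf_one _ _).escCount_succ_of_returns]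
  · refine ⟨fun i => escCount (f 0) (i - 1), fun i => escCount (f 1) (i - 1), ?_,
      ⟨_, Or.inr rfl⟩, ⟨_, Or.inr rfl⟩⟩
    convert (encodes_joinConf_two f).cons (A := escCount (joinConf 1 f)) (s := 0) rfl rfl rfl ?_
      using 2 with i
    · rcases i with _ | i
      · rfl
      · simp
    · intro n
      rw [zero_add, zero_add, add_comm, (outcome_joinConf_one _ _).escCount_succ_of_returns]
  · exact ⟨_, _, encodes_joinConf_two f, ⟨_, Or.inl rfl⟩, ⟨_, Or.inl rfl⟩⟩

theorem sparse_escCount (k : ℕ) (C : YConf) : Sparse k (escCount C) := by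
  induction k generalizing C with
  | zero => exact fun i => (isCount_escCount C).succ_le i
  | succ k ih =>
    obtain ⟨c, d, henc, hc, hd⟩ := exists_encodes C
    have aux : ∀ c : ℕ → ℕ, (∃ C', c = escCount C' ∨ c = fun i => escCount C' (i - 1)) →
        c 0 = 0 ∧ Sparse k c := by
      rintro c ⟨C', rfl | rfl⟩
      · exact ⟨rfl, ih C'⟩
      · exact ⟨rfl, (ih C').shift (isCount_escCount C')⟩
    obtain ⟨c0, cs⟩ := aux c hc
    obtain ⟨d0, ds⟩ := aux d hd
    refine henc.sparse_succ (isCount_escCount C) (by simp [c0, d0]) fun i => ?_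
    have h1 := cs i
    have h2 := ds i
    have h3 : 2 ^ (k + 1) = 2 * 2 ^ k := by ring
    omega

/-! ### Realizing sparse sequences -/

theorem Encodes.unique {A B S T : ℕ → ℕ} (hA : IsCount A) (hB : IsCount B) (hAS : Encodes A S)
    (hBT : Encodes B T) (hS0 : S 0 = 0) (n : ℕ) (hST : ∀ i ≤ n, S i = T i) {j : ℕ}
    (hj : j ≤ n + S n) : A j = B j := by
  induction n generalizing j with
  | zero =>
    obtain rfl : j = 0 := by omega
    rw [hA.zero, hB.zero]
  | succ n ih =>
    rcases le_or_gt j (n + S n) with h | h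
    · exact ih (fun i hi => hST i (by omega)) h
    have a1 := hAS n
    have b1 := hBT n
    have a2 := (hAS (n + 1)).1
    have b2 := (hBT (n + 1)).1
    rw [← hST n (by omega), ← hST (n + 1) le_rfl] at b1
    rw [← hST (n + 1) le_rfl] at b2
    rcases Nat.lt_or_ge j (n + 1 + S (n + 1)) with h' | h'
    · obtain ⟨x, rfl⟩ := Nat.exists_eq_add_of_lt h
      obtain ⟨y, hy⟩ := Nat.exists_eq_add_of_le
        (show n + S n + x + 1 ≤ n + S (n + 1) by omega)
      have a3 := hA.add_le (n + S n) (x + 1)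
      have b3 := hB.add_le (n + S n) (x + 1)
      have a4 := hA.add_le (n + S n + x + 1) y
      have b4 := hB.add_le (n + S n + x + 1) y
      rw [← hy] at a4 b4
      rw [← add_assoc] at a3 b3
      omega
    · obtain rfl : j = n + 1 + S (n + 1) := by omega
      omega

theorem exists_encodes_of_sparse {A : ℕ → ℕ} (hA : IsCount A) (h1 : Sparse 1 A) :
    ∃ S : ℕ → ℕ, S 0 = 0 ∧ (∀ i, S i ≤ S (i + 1)) ∧ (∀ i, S (i + 1) ≤ S i + 2) ∧
      Encodes A S := by
  have key : ∀ t, ∃ s ≤ 2, A (t + s) = A t + s ∧ A (t + s + 1) = A t + s := by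
    intro t
    have h3 : A (t + 1 + 1 + 1) ≤ A t + 2 := h1 t
    have := hA.le_succ t
    have := hA.succ_le t
    have := hA.le_succ (t + 1)
    have := hA.succ_le (t + 1)
    have := hA.le_succ (t + 1 + 1)
    by_cases c1 : A (t + 1) = A t
    · exact ⟨0, by omega, rfl, c1⟩
    by_cases c2 : A (t + 1 + 1) = A (t + 1)
    · exact ⟨1, by omega, by omega, by omega⟩
    · exact ⟨2, by omega, show A (t + 1 + 1) = _ by omega, show A (t + 1 + 1 + 1) = _ by omega⟩
  choose s hs2 hs hs' using key
  let S : ℕ → ℕ := Nat.rec 0 fun i x => x + s (i + x)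
  have hS : ∀ i, S (i + 1) = S i + s (i + S i) := fun i => rfl
  have hAS : ∀ i, A (i + S i) = S i := by
    intro i
    induction i with
    | zero => exact hA.zero
    | succ i ih =>
      rw [hS, show i + 1 + (S i + s (i + S i)) = i + S i + s (i + S i) + 1 by omega, hs', ih]
  refine ⟨S, rfl, fun i => by rw [hS]; omega, fun i => by rw [hS]; have := hs2 (i + S i); omega,
    fun i => ⟨hAS i, ?_⟩⟩
  rw [hS, ← add_assoc, hs, hAS]

theorem Encodes.window_le {A S : ℕ → ℕ} (hA : IsCount A) (h : Encodes A S) {k : ℕ}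
    (hk : Sparse (k + 1) A) (i : ℕ) : S (i + (2 ^ (k + 1) - 1)) ≤ S i + 2 ^ (k + 1) := by
  have hpow : 2 ^ (k + 1 + 1) = 2 * 2 ^ (k + 1) := by ring
  have hpos : 2 ≤ 2 ^ (k + 1) := by rw [pow_succ]; have := Nat.one_le_two_pow (n := k); omega
  obtain ⟨m, hm⟩ : ∃ m, 2 ^ (k + 1) = m + 1 + 1 := ⟨2 ^ (k + 1) - 2, by omega⟩
  have hki := hk (i + S i)
  rw [hpow] at hki
  rw [hm] at hki ⊢
  simp only [Nat.add_sub_cancel]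
  by_contra! hcon
  have e1 := (h i).1
  have e2 := (h (i + m)).2
  rw [add_assoc i m 1] at e2
  obtain ⟨y, hy⟩ := Nat.exists_eq_add_of_le
    (show i + S i + (2 * (m + 1 + 1) - 1) ≤ i + m + S (i + (m + 1)) by omega)
  have := hA.add_le (i + S i + (2 * (m + 1 + 1) - 1)) y
  rw [← hy] at this
  omega

theorem not_ychipReturns_const_two : ¬ ychipReturns (fun _ => 2) := by
  have key : ∀ k, ∃ C, ystep^[k] ((fun _ => 2 : YConf), some []) =
      (C, some (List.replicate k 0)) ∧ ∀ w, k ≤ w.length → C w = 2 := by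
    intro k
    induction k with
    | zero => exact ⟨_, rfl, fun _ _ => rfl⟩
    | succ k ih =>
      obtain ⟨C, hC, h2⟩ := ih
      refine ⟨Function.update C (List.replicate k 0) 0, ?_, fun w hw => ?_⟩
      · have h : C (List.replicate k 0) + 1 = 0 := by rw [h2 _ (by simp)]; rfl
        rw [Function.iterate_succ_apply', hC, List.replicate_succ']
        simp only [ystep, h]
        rfl
      · rw [Function.update_of_ne, h2 w (by omega)]
        rintro rfl
        simp at hw
  rintro ⟨k, hk⟩
  obtain ⟨C, hC, -⟩ := key k
  simp [hC] at hk

theorem exists_conf_escCount_eq (n : ℕ) {A : ℕ → ℕ} (hA : IsCount A) (hs : ∀ k, Sparse k A) :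
    ∃ C, ∀ j ≤ n, escCount C j = A j := by
  induction n generalizing A with
  | zero =>
    refine ⟨fun _ => 2, fun j hj => ?_⟩
    obtain rfl : j = 0 := by omega
    rw [hA.zero, escCount_zero]
  | succ n ih =>
    have key : ∀ {A : ℕ → ℕ}, IsCount A → (∀ k, Sparse k A) → ∃ (S : ℕ → ℕ) (f : Fin 2 → YConf),
        S 0 = 0 ∧ (∀ i, S i ≤ S (i + 1)) ∧ Encodes A S ∧
          ∀ j ≤ n + S n, escCount (joinConf 2 f) j = A j := by
      intro A hA hs
      obtain ⟨S, hS0, hS1, hS2, henc⟩ := exists_encodes_of_sparse hA (hs 1)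
      have hw := fun k => henc.window_le hA (hs (k + 1))
      simp only [pow_succ 2] at hw
      obtain ⟨l, hl⟩ := ih (A := fun i => (S i + 1) / 2)
        ⟨by simp [hS0], fun i => by have := hS1 i; omega,
          fun i => by have := hS2 i; omega⟩
        (fun k i => by have := hw k i; rw [pow_succ]; dsimp only; omega)
      obtain ⟨r, hr⟩ := ih (A := fun i => S i / 2)
        ⟨by simp [hS0], fun i => by have := hS1 i; omega,
          fun i => by have := hS2 i; omega⟩
        (fun k i => by have := hw k i; rw [pow_succ]; dsimp only; omega)
      refine ⟨S, ![l, r], hS0, hS1, henc, fun j hj => ?_⟩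
      refine (henc.unique hA (isCount_escCount _) (encodes_joinConf_two ![l, r]) hS0 n ?_ hj).symm
      intro i hi
      simp only [Matrix.cons_val_zero, Matrix.cons_val_one, hl i hi, hr i hi]
      omega
    have hz := hA.zero
    by_cases h1 : A 1 = 0
    · obtain ⟨S, f, -, -, -, hf⟩ := key (A := fun i => A (i + 1))
        ⟨h1, fun i => hA.le_succ _, fun i => hA.succ_le _⟩ fun k i => by
          have := hs k (i + 1)
          rwa [add_right_comm] at this
      refine ⟨joinConf 1 f, ?_⟩
      rintro (_ | j) hj
      · rw [hz, escCount_zero]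
      · rw [(outcome_joinConf_one _ _).escCount_succ_of_returns]
        exact hf j (by omega)
    have h1' : A 1 = 1 := by have : A 1 ≤ A 0 + 1 := hA.succ_le 0; omega
    rcases Nat.eq_zero_or_pos n with rfl | hn
    · refine ⟨fun _ => 2, fun j hj => ?_⟩
      obtain rfl | rfl : j = 0 ∨ j = 1 := by omega
      · rw [hz, escCount_zero]
      · simp [escCount, not_ychipReturns_const_two, h1']
    · obtain ⟨S, f, hS0, hS, henc, hf⟩ := key hA hs
      refine ⟨joinConf 2 f, fun j hj => hf j (hj.trans ?_)⟩
      have hS1 : 1 ≤ S 1 := by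
        by_contra! hlt
        have := (henc 1).1
        rw [show S 1 = 0 by omega] at this
        exact h1 this
      have : S 1 ≤ S n := monotone_nat_of_le_succ hS hn
      omega

/-! ### Words -/

/-- The number of ones among the first `n` letters of a word. -/
def prefixCount (a : List Bool) (n : ℕ) : ℕ := (a.take n).count true

theorem prefixCount_add (a : List Bool) (m n : ℕ) :
    prefixCount a (m + n) = prefixCount a m + ((a.drop m).take n).count true := by
  rw [prefixCount, List.take_add, List.count_append, prefixCount]

theorem prefixCount_succ (a : List Bool) {n : ℕ} (hn : n < a.length) :
    prefixCount a (n + 1) = prefixCount a n + if a[n] = true then 1 else 0 := by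
  rw [prefixCount, List.take_succ_eq_append_getElem hn, List.count_append, prefixCount,
    List.count_singleton]
  simp

theorem isCount_prefixCount (a : List Bool) : IsCount (prefixCount a) := by
  refine ⟨by simp [prefixCount], fun n => ?_, fun n => ?_⟩ <;> rw [prefixCount_add]
  · omega
  · exact Nat.add_le_add_left (List.count_le_length.trans (by simp)) _

theorem condP_iff (a : List Bool) (k : ℕ) : CondP a (k + 1) ↔
    ∀ i, i + (2 ^ (k + 1) - 1) ≤ a.length →
      prefixCount a (i + (2 ^ (k + 1) - 1)) ≤ prefixCount a i + 2 ^ k := by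
  simp [CondP, prefixCount_add]

theorem sparse_prefixCount {a : List Bool} (h : ∀ k, CondP a (k + 1)) (k : ℕ) :
    Sparse k (prefixCount a) := by
  have hc := isCount_prefixCount a
  have key : ∀ k i m, m ≤ 2 ^ (k + 1) - 1 → prefixCount a (i + m) ≤ prefixCount a i + 2 ^ k := by
    intro k
    induction k with
    | zero => exact fun i m hm => (hc.add_le i m).trans (by simpa using hm)
    | succ k ih =>
      have hpow : 2 ^ (k + 1 + 1) = 2 * 2 ^ (k + 1) := by ring
      have hpow' : 2 ^ (k + 1) = 2 * 2 ^ k := by ring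
      have hpos : 1 ≤ 2 ^ k := Nat.one_le_two_pow
      have short : ∀ i m, m < 2 ^ (k + 1 + 1) - 1 →
          prefixCount a (i + m) ≤ prefixCount a i + 2 ^ (k + 1) := by
        intro i m hm
        have h1 := ih i (m / 2) (by omega)
        have h2 := ih (i + m / 2) (m - m / 2) (by omega)
        rw [show i + m / 2 + (m - m / 2) = i + m by omega] at h2
        omega
      intro i m hm
      rcases hm.lt_or_eq with hlt | rfl
      · exact short i m hlt
      by_cases hl : i + (2 ^ (k + 1 + 1) - 1) ≤ a.length
      · exact (condP_iff a (k + 1)).1 (h (k + 1)) i hl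
      · have h3 := short i (2 ^ (k + 1 + 1) - 1 - 1) (by omega)
        have h4 : prefixCount a (i + (2 ^ (k + 1 + 1) - 1)) =
            prefixCount a (i + (2 ^ (k + 1 + 1) - 1 - 1)) := by
          rw [prefixCount, prefixCount, List.take_of_length_le (by omega),
            List.take_of_length_le (by omega)]
        omega
  exact fun i => key k i _ le_rfl

theorem yconfSeq_eq_iterate (C : YConf) (n : ℕ) : yconfSeq C n = ynextConf^[n] C := by
  induction n with
  | zero => rfl
  | succ n ih => rw [yconfSeq, ih, Function.iterate_succ_apply']

theorem escape_word_iff (a : List Bool) (C : YConf) :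
    (∀ j : Fin a.length, (a.get j = true ↔ yescapes C j.val)) ↔
      ∀ n ≤ a.length, escCount C n = prefixCount a n := by
  constructor
  · intro h n
    induction n with
    | zero => simp [escCount, prefixCount]
    | succ n ih =>
      intro hn
      have hj := h ⟨n, hn⟩
      rw [yescapes, yconfSeq_eq_iterate, List.get_eq_getElem] at hj
      dsimp only at hj
      rw [escCount_succ', ih (by omega), prefixCount_succ a hn]
      split_ifs <;> tauto
  · rintro h ⟨j, hj⟩
    have h1 := h (j + 1) hj
    rw [escCount_succ', h j hj.le, prefixCount_succ a hj] at h1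
    rw [yescapes, yconfSeq_eq_iterate, List.get_eq_getElem]
    dsimp only
    split_ifs at h1 <;> simp_all

/-- Lemma 4.6: a binary word `a = a₁…aₙ` is the escape sequence of the first
`n` chips for some initial rotor configuration on the branch `Y` (the `j`-th
letter is `true` iff the `j`-th chip escapes to infinity) if and only if `a`
satisfies condition `(P_k)` for every `k ≥ 1`: every subword of `a` of length
`2ᵏ − 1` contains at most `2^(k−1)` ones. -/
theorem stmt16 (a : List Bool) :
    (∃ C0 : YConf, ∀ j : Fin a.length, (a.get j = true ↔ yescapes C0 j.val))
      ↔ ∀ k : ℕ, 1 ≤ k → CondP a k := by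
  have hk : (∀ k : ℕ, 1 ≤ k → CondP a k) ↔ ∀ k, CondP a (k + 1) :=
    ⟨fun h k => h _ (by omega), fun h k hk => by
      obtain ⟨k, rfl⟩ := Nat.exists_eq_add_of_le' hk
      exact h k⟩
  simp only [hk, escape_word_iff]
  constructor
  · rintro ⟨C, hC⟩ k
    rw [condP_iff]
    intro i hi
    rw [← hC _ hi, ← hC i (by omega)]
    exact sparse_escCount k C i
  · exact fun h => exists_conf_escCount_eq _ (isCount_prefixCount a) (sparse_prefixCount h)
end
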